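/- If the frustration index of a signed complete graph (K_n, σ) satisfies l(K_n, σ) ≤ (n − 1)/2, then the maximum number of pairwise edge-disjoint negative circles equals the frustration index: p′_−(K_n, σ) = l(K_n, σ). -/

import Mathlib

/-- The sign of a walk in a signed graph: the product of the signs of its edges. -/
def walkSign {V : Type*} (G : SimpleGraph V) (σ : Sym2 V → ℤˣ) {u v : V}
    (w : G.Walk u v) : ℤˣ :=
  (w.edges.map σ).prod

/-- A signed graph is balanced if every circle (cycle) is positive. -/
def sgBalanced {V : Type*} (G : SimpleGraph V) (σ : Sym2 V → ℤˣ) : Prop :=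
  ∀ ⦃v : V⦄ (w : G.Walk v v), w.IsCycle → walkSign G σ w = 1

/-- The frustration index `l(Σ)`: the minimum number of edges whose deletion leaves a
balanced signed graph. -/
noncomputable def frustIndex {V : Type*} (G : SimpleGraph V) (σ : Sym2 V → ℤˣ) : ℕ :=
  sInf {k | ∃ F : Finset (Sym2 V), ↑F ⊆ G.edgeSet ∧ F.card = k ∧
    sgBalanced (G.deleteEdges ↑F) σ}

/-- `p′₋(Σ)`: the maximum number of pairwise edge-disjoint negative circles in `Σ`. -/
noncomputable def negCirclePackEdge {V : Type*} (G : SimpleGraph V)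
    (σ : Sym2 V → ℤˣ) : ℕ :=
  sSup {k | ∃ c : Fin k → (a : V) × G.Walk a a,
    (∀ i, (c i).2.IsCycle ∧ walkSign G σ (c i).2 = -1) ∧
    ∀ i j, i ≠ j → ∀ e ∈ (c i).2.edges, e ∉ (c j).2.edges}

/-!
Fix a minimum balancing set `F`, of size `l`. If `s(u, v) ∈ F`, a walk from `u` to `v` avoiding `F`
has sign opposite to `s(u, v)`: otherwise it could stand in for the edge, and removing `s(u, v)`
from `F` would leave a balancing set. (This uses that in a balanced graph all closed walks are
positive, not just the circles.) So every triangle with exactly one edge in `F` is negative.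

It remains to choose an apex for each edge of `F` so that the resulting triangles are pairwise
edge-disjoint, i.e. share at most one vertex; the triangle on one edge of `F` then contains no other
edge of `F`. Choosing greedily, each of the other `l - 1` edges of `F`, or the triangle already
built on it, excludes at most two apexes, so it is enough that each edge lies in at least `2l - 1`
triangles. In `K_n` it lies in `n - 2` of them. The resulting `l` negative circles are optimal,
since edge-disjoint negative circles meet `F` in distinct edges.
-/

/-- An edge set `F` is a balancing set of `(G, σ)` if deleting it leaves a balanced signed graph;
the frustration index is the smallest size of such a set. -/
def IsBalancingSet {V : Type*} (G : SimpleGraph V) (σ : Sym2 V → ℤˣ) (F : Finset (Sym2 V)) : Prop :=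
  ↑F ⊆ G.edgeSet ∧ sgBalanced (G.deleteEdges ↑F) σ

/-- A packing of negative circles: pairwise edge-disjoint cycles of sign `-1`, each one encoded as
a closed walk together with its base point. -/
def IsNegCirclePacking {V ι : Type*} (G : SimpleGraph V) (σ : Sym2 V → ℤˣ)
    (c : ι → (a : V) × G.Walk a a) : Prop :=
  (∀ i, (c i).2.IsCycle ∧ walkSign G σ (c i).2 = -1) ∧
    ∀ i j, i ≠ j → ∀ e ∈ (c i).2.edges, e ∉ (c j).2.edges

/-- A family of finite sets is linear if two distinct members share at most one point (it is the
edge family of a linear hypergraph). -/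
def IsLinearFamily {V ι : Type*} (T : ι → Finset V) : Prop :=
  ∀ ⦃i j⦄, i ≠ j → (T i ∩ T j : Set V).Subsingleton

section Walks

variable {V : Type*} {G H : SimpleGraph V} {σ : Sym2 V → ℤˣ} {u v w : V}

@[simp]
lemma walkSign_nil : walkSign G σ (.nil : G.Walk u u) = 1 := rfl

@[simp]
lemma walkSign_cons (h : G.Adj u v) (p : G.Walk v w) :
    walkSign G σ (.cons h p) = σ s(u, v) * walkSign G σ p := by
  simp [walkSign]

@[simp]
lemma walkSign_append (p : G.Walk u v) (q : G.Walk v w) :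
    walkSign G σ (p.append q) = walkSign G σ p * walkSign G σ q := by
  simp [walkSign]

lemma walkSign_reverse (p : G.Walk u v) : walkSign G σ p.reverse = walkSign G σ p := by
  simp [walkSign, List.prod_reverse]

lemma walkSign_mapLe (h : G ≤ H) (p : G.Walk u v) : walkSign H σ (p.mapLe h) = walkSign G σ p := by
  simp [walkSign]

lemma exists_walk_walkSign_eq
    (h : ∀ x y, H.Adj x y → ∃ q : G.Walk x y, walkSign G σ q = σ s(x, y)) (p : H.Walk u v) :
    ∃ q : G.Walk u v, walkSign G σ q = walkSign H σ p := by
  induction p with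
  | nil => exact ⟨.nil, rfl⟩
  | cons hadj p ih =>
    obtain ⟨q, hq⟩ := ih
    obtain ⟨r, hr⟩ := h _ _ hadj
    exact ⟨r.append q, by simp [hq, hr]⟩

end Walks

namespace sgBalanced

variable {V : Type*} {G H : SimpleGraph V} {σ : Sym2 V → ℤˣ} {u v : V}

lemma walkSign_cons_eq_one_of_isPath (hG : sgBalanced G σ) (h : G.Adj u v) {p : G.Walk v u}
    (hp : p.IsPath) : walkSign G σ (.cons h p) = 1 := by
  by_cases hmem : s(v, u) ∈ p.edges
  · rw [hp.eq_adj_toWalk_of_mem_edges hmem]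
    simp [SimpleGraph.Adj.toWalk, Sym2.eq_swap (a := v)]
  · exact hG _ ((p.cons_isCycle_iff h).2 ⟨hp, Sym2.eq_swap ▸ hmem⟩)

lemma walkSign_bypass [DecidableEq V] (hG : sgBalanced G σ) (p : G.Walk u v) :
    walkSign G σ p.bypass = walkSign G σ p := by
  induction p with
  | nil => rfl
  | cons h p ih =>
    rw [walkSign_cons, ← ih, SimpleGraph.Walk.bypass]
    split_ifs with hs
    · have hloop := hG.walkSign_cons_eq_one_of_isPath h (p.bypass_isPath.takeUntil hs)
      conv_rhs => rw [← p.bypass.take_spec hs]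
      rw [walkSign_append, ← mul_assoc, ← walkSign_cons h, hloop, one_mul]
    · rw [walkSign_cons]

lemma walkSign_eq_one (hG : sgBalanced G σ) (p : G.Walk u u) : walkSign G σ p = 1 := by
  classical
  rw [← hG.walkSign_bypass, (SimpleGraph.Walk.isPath_iff_nil.1 p.bypass_isPath).eq_nil,
    walkSign_nil]

lemma of_forall_adj_exists_walk (hG : sgBalanced G σ)
    (h : ∀ x y, H.Adj x y → ∃ q : G.Walk x y, walkSign G σ q = σ s(x, y)) : sgBalanced H σ := by
  intro v p _
  obtain ⟨q, hq⟩ := exists_walk_walkSign_eq h p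
  rw [← hq, hG.walkSign_eq_one]

end sgBalanced

section BalancingSet

variable {V : Type*} {G : SimpleGraph V} {σ : Sym2 V → ℤˣ} {F : Finset (Sym2 V)}

lemma frustIndex_le_card (hF : IsBalancingSet G σ F) : frustIndex G σ ≤ F.card :=
  Nat.sInf_le ⟨F, hF.1, rfl, hF.2⟩

lemma exists_isBalancingSet_card_eq_frustIndex (h : ∃ F, IsBalancingSet G σ F) :
    ∃ F, IsBalancingSet G σ F ∧ F.card = frustIndex G σ := by
  obtain ⟨F, hF⟩ := h
  have hne : {k | ∃ F : Finset (Sym2 V), ↑F ⊆ G.edgeSet ∧ F.card = k ∧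
      sgBalanced (G.deleteEdges ↑F) σ}.Nonempty := ⟨F.card, F, hF.1, rfl, hF.2⟩
  obtain ⟨F', hsub, hcard, hbal⟩ := Nat.sInf_mem hne
  exact ⟨F', ⟨hsub, hbal⟩, hcard⟩

lemma exists_isBalancingSet_of_finite (hG : G.edgeSet.Finite) : ∃ F, IsBalancingSet G σ F := by
  refine ⟨hG.toFinset, by simp, fun v p hp => ?_⟩
  cases p with
  | nil => exact (hp.ne_nil rfl).elim
  | cons h p => simp at h

namespace IsBalancingSet

lemma exists_mem_edges (hF : IsBalancingSet G σ F) {v : V} {c : G.Walk v v} (hc : c.IsCycle)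
    (hneg : walkSign G σ c = -1) : ∃ e ∈ F, e ∈ c.edges := by
  by_contra! hdisj
  have hedges : ∀ e ∈ c.edges, e ∈ (G.deleteEdges ↑F).edgeSet := fun e he => by
    rw [SimpleGraph.edgeSet_deleteEdges]
    exact ⟨c.edges_subset_edgeSet he, fun heF => hdisj e heF he⟩
  have hpos := hF.2 (c.transfer _ hedges) (hc.transfer hedges)
  have hsign : walkSign _ σ (c.transfer _ hedges) = walkSign G σ c := by simp [walkSign]
  exact absurd (hpos.symm.trans (hsign.trans hneg)) (by decide)

lemma card_le_of_isNegCirclePacking (hF : IsBalancingSet G σ F) {ι : Type*} [Fintype ι]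
    {c : ι → (a : V) × G.Walk a a} (hc : IsNegCirclePacking G σ c) : Fintype.card ι ≤ F.card := by
  choose f hfF hfc using fun i => hF.exists_mem_edges (hc.1 i).1 (hc.1 i).2
  have hf : Function.Injective fun i => (⟨f i, hfF i⟩ : F) := fun i j hij => by
    by_contra hne
    exact hc.2 i j hne (f i) (hfc i) (Subtype.mk.inj hij ▸ hfc j)
  simpa using Fintype.card_le_of_injective _ hf

lemma negCirclePackEdge_eq_card (hF : IsBalancingSet G σ F)
    {c : F → (a : V) × G.Walk a a} (hc : IsNegCirclePacking G σ c) :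
    negCirclePackEdge G σ = F.card := by
  refine IsGreatest.csSup_eq ⟨?_, ?_⟩
  · exact ⟨c ∘ F.equivFin.symm, fun i => hc.1 _, fun i j hij =>
      hc.2 _ _ (F.equivFin.symm.injective.ne hij)⟩
  · rintro k ⟨c', hc'⟩
    simpa using hF.card_le_of_isNegCirclePacking (c := c') hc'

variable [DecidableEq V] {u v w : V}

lemma erase (hF : IsBalancingSet G σ F) (p : (G.deleteEdges ↑F).Walk u v)
    (hp : walkSign _ σ p = σ s(u, v)) : IsBalancingSet G σ (F.erase s(u, v)) := by
  refine ⟨fun e he => hF.1 (Finset.mem_of_mem_erase he), hF.2.of_forall_adj_exists_walk ?_⟩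
  intro x y hxy
  simp only [SimpleGraph.deleteEdges_adj, Finset.mem_coe, Finset.mem_erase, not_and] at hxy
  by_cases heq : s(x, y) = s(u, v)
  · rcases Sym2.eq_iff.1 heq with ⟨rfl, rfl⟩ | ⟨rfl, rfl⟩
    · exact ⟨p, hp⟩
    · exact ⟨p.reverse, by rw [walkSign_reverse, hp, heq]⟩
  · have hadj : (G.deleteEdges ↑F).Adj x y := by simpa using ⟨hxy.1, hxy.2 heq⟩
    exact ⟨hadj.toWalk, by simp [SimpleGraph.Adj.toWalk]⟩

-- A positive circle would let `p` replace `s(u, v)`, which then need not be deleted.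
lemma exists_neg_circle_of_isPath (hF : IsBalancingSet G σ F) (he : s(u, v) ∈ F)
    (hmin : ¬ IsBalancingSet G σ (F.erase s(u, v))) {p : (G.deleteEdges ↑F).Walk v u}
    (hp : p.IsPath) :
    ∃ c : G.Walk u u, (c.IsCycle ∧ walkSign G σ c = -1) ∧ c.support = u :: p.support := by
  have hle : G.deleteEdges ↑F ≤ G := G.deleteEdges_le _
  have hadj : G.Adj u v := hF.1 he
  refine ⟨.cons hadj (p.mapLe hle), ⟨?_, ?_⟩, by simp⟩
  · rw [SimpleGraph.Walk.cons_isCycle_iff]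
    refine ⟨(SimpleGraph.Walk.isPath_mapLe hle).2 hp, fun hmem => ?_⟩
    rw [SimpleGraph.Walk.edges_mapLe_eq_edges] at hmem
    have hdeleted := p.edges_subset_edgeSet hmem
    simp [he] at hdeleted
  · have hne : walkSign _ σ p ≠ σ s(u, v) := fun heq =>
      hmin (hF.erase p.reverse ((walkSign_reverse p).trans heq))
    rw [walkSign_cons, walkSign_mapLe, Int.units_ne_iff_eq_neg.1 hne, mul_neg, Int.units_mul_self]

lemma exists_neg_triangle (hF : IsBalancingSet G σ F) (he : s(u, v) ∈ F)
    (hmin : ¬ IsBalancingSet G σ (F.erase s(u, v))) (hvw : (G.deleteEdges ↑F).Adj v w)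
    (hwu : (G.deleteEdges ↑F).Adj w u) :
    ∃ c : G.Walk u u, (c.IsCycle ∧ walkSign G σ c = -1) ∧ c.support ⊆ [u, v, w] := by
  have hvu : v ≠ u := (hF.1 he : G.Adj u v).ne'
  have hp : (SimpleGraph.Walk.cons hvw (.cons hwu .nil)).IsPath := by
    simp [SimpleGraph.Walk.cons_isPath_iff, hvw.ne, hwu.ne, hvu]
  obtain ⟨c, hc, hsupp⟩ := hF.exists_neg_circle_of_isPath he hmin hp
  exact ⟨c, hc, by simp [hsupp]⟩

end IsBalancingSet

end BalancingSet

section LinearFamily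

variable {V ι : Type*}

lemma isLinearFamily_toFinset [DecidableEq V] (F : Finset (Sym2 V)) :
    IsLinearFamily fun e : F => e.1.toFinset := by
  rintro e f hef x ⟨hxe, hxf⟩ y ⟨hye, hyf⟩
  simp only [Finset.mem_coe, Sym2.mem_toFinset] at hxe hxf hye hyf
  by_contra hxy
  exact hef (Subtype.ext (Sym2.eq_of_ne_mem hxy hxe hye hxf hyf))

lemma card_sdiff_le_of_not_disjoint [DecidableEq V] {s t : Finset V} {k : ℕ} (hs : s.card ≤ k + 1)
    (hst : ¬ Disjoint s t) : (s \ t).card ≤ k := by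
  have hinter : 0 < (s ∩ t).card :=
    Finset.card_pos.2 (Finset.not_disjoint_iff_nonempty_inter.1 hst)
  have := Finset.card_sdiff_add_card_inter s t
  omega

namespace IsLinearFamily

variable {T : ι → Finset V}

lemma notMem_edges {G : SimpleGraph V} {c : ι → (a : V) × G.Walk a a} (hT : IsLinearFamily T)
    (hc : ∀ i, ∀ x ∈ (c i).2.support, x ∈ T i) {i j : ι} (hij : i ≠ j) {e : Sym2 V}
    (he : e ∈ (c i).2.edges) : e ∉ (c j).2.edges := by
  induction e using Sym2.ind with
  | _ x y =>
    intro he'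
    have hx : x ∈ (T i ∩ T j : Set V) := ⟨hc i x ((c i).2.fst_mem_support_of_mem_edges he),
      hc j x ((c j).2.fst_mem_support_of_mem_edges he')⟩
    have hy : y ∈ (T i ∩ T j : Set V) := ⟨hc i y ((c i).2.snd_mem_support_of_mem_edges he),
      hc j y ((c j).2.snd_mem_support_of_mem_edges he')⟩
    exact ((c i).2.adj_of_mem_edges he).ne (hT hij hx hy)

variable [DecidableEq V]

lemma update_insert [DecidableEq ι] (hT : IsLinearFamily T) {a : ι} {x : V}
    (hx : ∀ j ≠ a, ¬ Disjoint (T j) (T a) → x ∉ T j \ T a) :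
    IsLinearFamily (Function.update T a (insert x (T a))) := by
  have hmeet : ∀ j ≠ a, ((insert x (T a) : Finset V) ∩ T j : Set V).Subsingleton := by
    intro j hj
    by_cases hd : Disjoint (T j) (T a)
    · refine Set.subsingleton_singleton (a := x) |>.anti ?_
      rintro y ⟨hy, hyj⟩
      exact (Finset.mem_insert.1 hy).resolve_right (Finset.disjoint_left.1 hd hyj)
    · refine (hT hj.symm).anti ?_
      rintro y ⟨hy, hyj⟩
      have hxj := hx j hj hd
      grind
  intro i j hij
  obtain rfl | hi := eq_or_ne i a
  · simpa [hij.symm] using hmeet j hij.symm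
  obtain rfl | hj := eq_or_ne j a
  · simpa [hi, Set.inter_comm] using hmeet i hi
  · simpa [hi, hj] using hT hij

variable [Fintype ι] {k : ℕ}

-- The points to avoid are those of `T j \ T a` with `T j` meeting `T a`: at most `k` for each `j`.
lemma exists_mem_update_insert [DecidableEq ι] (hT : IsLinearFamily T)
    (hk : ∀ i, (T i).card ≤ k + 1) (a : ι) {N : Set V}
    (hN : ((Fintype.card ι - 1) * k : ℕ) < N.encard) :
    ∃ x ∈ N, IsLinearFamily (Function.update T a (insert x (T a))) := by
  let J := (Finset.univ.erase a).filter fun j => ¬ Disjoint (T j) (T a)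
  let B := J.biUnion fun j => T j \ T a
  have hB : B.card ≤ (Fintype.card ι - 1) * k := calc
    B.card ≤ J.card * k := Finset.card_biUnion_le_card_mul _ _ _ fun j hj =>
      card_sdiff_le_of_not_disjoint (hk j) (Finset.mem_filter.1 hj).2
    _ ≤ (Finset.univ.erase a).card * k := by gcongr; exact Finset.filter_subset _ _
    _ = (Fintype.card ι - 1) * k := by simp
  obtain ⟨x, hxN, hxB⟩ : ∃ x ∈ N, x ∉ B := Set.not_subset.1 fun hsub => by
    have hle := Set.encard_le_encard hsub
    rw [Set.encard_coe_eq_coe_finsetCard] at hle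
    exact (hN.trans_le hle).not_ge (by exact_mod_cast hB)
  refine ⟨x, hxN, hT.update_insert fun j hj hd hxj => hxB ?_⟩
  exact Finset.mem_biUnion.2 ⟨j, by simp [J, hj, hd], hxj⟩

lemma exists_insert (hT : IsLinearFamily T) (hk : ∀ i, (T i).card ≤ k) {N : ι → Set V}
    (hN : ∀ i, ((Fintype.card ι - 1) * k : ℕ) < (N i).encard) :
    ∃ x : ι → V, (∀ i, x i ∈ N i) ∧ IsLinearFamily fun i => insert (x i) (T i) := by
  classical
  suffices ∀ A : Finset ι, ∃ x : ι → V, (∀ i, x i ∈ N i) ∧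
      IsLinearFamily fun i => if i ∈ A then insert (x i) (T i) else T i by
    simpa using this Finset.univ
  intro A
  induction A using Finset.induction_on with
  | empty =>
    have hne : ∀ i, (N i).Nonempty := fun i => Set.encard_pos.1 (bot_le.trans_lt (hN i))
    exact ⟨fun i => (hne i).some, fun i => (hne i).some_mem, by simpa using hT⟩
  | insert a A ha ih =>
    obtain ⟨x, hx, hlin⟩ := ih
    have hcard : ∀ i, (if i ∈ A then insert (x i) (T i) else T i).card ≤ k + 1 := fun i => by
      split_ifs
      · exact (Finset.card_insert_le _ _).trans (by gcongr; exact hk i)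
      · exact (hk i).trans k.le_succ
    obtain ⟨y, hy, hlin'⟩ := hlin.exists_mem_update_insert hcard a (hN a)
    refine ⟨Function.update x a y, fun i => ?_, ?_⟩
    · obtain rfl | hi := eq_or_ne i a <;> simp [*]
    · convert hlin' using 2 with i
      obtain rfl | hi := eq_or_ne i a <;> simp [*]

end IsLinearFamily

end LinearFamily

section Packing

variable {V : Type*} {G : SimpleGraph V} {σ : Sym2 V → ℤˣ} {F : Finset (Sym2 V)}

lemma IsBalancingSet.exists_isNegCirclePacking [DecidableEq V] (hF : IsBalancingSet G σ F)
    (hmin : ∀ e ∈ F, ¬ IsBalancingSet G σ (F.erase e)) {x : F → V}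
    (hx : ∀ e : F, ∀ u ∈ e.1, G.Adj u (x e))
    (hT : IsLinearFamily fun e : F => insert (x e) e.1.toFinset) :
    ∃ c : F → (a : V) × G.Walk a a, IsNegCirclePacking G σ c := by
  have hside : ∀ e : F, ∀ u ∈ e.1, (G.deleteEdges ↑F).Adj u (x e) := by
    intro e u hu
    rw [SimpleGraph.deleteEdges_adj]
    refine ⟨hx e u hu, fun hf => ?_⟩
    have hne : e ≠ ⟨s(u, x e), hf⟩ := fun heq => by
      have hval : e.1 = s(u, x e) := congrArg Subtype.val heq
      exact (hx e (x e) (hval ▸ Sym2.mem_mk_right u (x e))).ne rfl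
    exact (hx e u hu).ne (hT hne (by simp [hu]) (by simp))
  have hcircle : ∀ e : F, ∃ c : (a : V) × G.Walk a a,
      (c.2.IsCycle ∧ walkSign G σ c.2 = -1) ∧
        ∀ y ∈ c.2.support, y ∈ insert (x e) e.1.toFinset := by
    rintro ⟨e, he⟩
    induction e using Sym2.ind with
    | _ u v =>
      obtain ⟨c, hc, hsupp⟩ := hF.exists_neg_triangle he (hmin _ he)
        (hside ⟨_, he⟩ v (Sym2.mem_mk_right u v)) (hside ⟨_, he⟩ u (Sym2.mem_mk_left u v)).symm
      refine ⟨⟨u, c⟩, hc, fun y hy => ?_⟩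
      have hyuvw := hsupp hy
      simp only [List.mem_cons, List.not_mem_nil, or_false] at hyuvw
      simp only [Finset.mem_insert, Sym2.mem_toFinset, Sym2.mem_iff]
      tauto
  choose c hc hsupp using hcircle
  exact ⟨c, hc, fun e f hef _ he => hT.notMem_edges hsupp hef he⟩

theorem negCirclePack_eq_frustIndex_of_small_general (hfin : ∃ F, IsBalancingSet G σ F)
    (h : ∀ u v, G.Adj u v →
      2 * (frustIndex G σ : ℕ∞) ≤ (G.commonNeighbors u v).encard + 1) :
    negCirclePackEdge G σ = frustIndex G σ := by
  classical
  obtain ⟨F, hF, hcard⟩ := exists_isBalancingSet_card_eq_frustIndex hfin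
  have hmin : ∀ e ∈ F, ¬ IsBalancingSet G σ (F.erase e) := fun e he hF' =>
    (Finset.card_erase_lt_of_mem he).not_ge (hcard ▸ frustIndex_le_card hF')
  have hcommon : ∀ e : F, (((Fintype.card F - 1) * 2 : ℕ) : ℕ∞) <
      {w | ∀ u ∈ e.1, G.Adj u w}.encard := by
    rintro ⟨e, he⟩
    induction e using Sym2.ind with
    | _ u v =>
      have hcn : {w | ∀ x ∈ s(u, v), G.Adj x w} = G.commonNeighbors u v := by
        ext; simp [SimpleGraph.mem_commonNeighbors]
      have huv := h u v (hF.1 he)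
      have hpos : 0 < F.card := Finset.card_pos.2 ⟨_, he⟩
      rw [hcn, Fintype.card_coe]
      rw [← hcard] at huv
      by_contra! hle
      have hcount := huv.trans (add_le_add_left hle 1)
      norm_cast at hcount
      omega
  obtain ⟨x, hx, hT⟩ := (isLinearFamily_toFinset F).exists_insert
    (fun e => by rw [Sym2.card_toFinset]; split_ifs <;> simp) hcommon
  obtain ⟨c, hc⟩ := hF.exists_isNegCirclePacking hmin hx hT
  rw [hF.negCirclePackEdge_eq_card hc, hcard]

end Packing

lemma encard_commonNeighbors_top {V : Type*} [Fintype V] {u v : V} (huv : u ≠ v) :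
    ((⊤ : SimpleGraph V).commonNeighbors u v).encard = (Fintype.card V - 2 : ℕ) := by
  classical
  rw [← SimpleGraph.card_commonNeighbors_top huv, ← Set.coe_fintypeCard]

/-- If the frustration index of a signed complete graph `(K_n, σ)` is at most
`(n-1)/2`, then the maximum number of pairwise edge-disjoint negative circles equals
the frustration index. -/
theorem negCirclePack_eq_frustIndex_of_small (n : ℕ) (σ : Sym2 (Fin n) → ℤˣ)
    (h : 2 * frustIndex (⊤ : SimpleGraph (Fin n)) σ ≤ n - 1) :
    negCirclePackEdge (⊤ : SimpleGraph (Fin n)) σ =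
      frustIndex (⊤ : SimpleGraph (Fin n)) σ := by
  refine negCirclePack_eq_frustIndex_of_small_general
    (exists_isBalancingSet_of_finite (Set.toFinite _)) fun u v huv => ?_
  rw [encard_commonNeighbors_top huv.ne, Fintype.card_fin]
  exact_mod_cast (by omega : 2 * frustIndex ⊤ σ ≤ n - 2 + 1)
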